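/- arXiv:2208.04802 — 2 statements merged into one kernel-verified Lean document; each statement's English description precedes it below -/
import Mathlib

section
/- Any (3,n) rooted merge is guaranteed to be found by the LESP algorithm: regardless of the execution order, at least one provenance for the rooted tree obtained by merging three (n,s_i)-rooted paths at the non-seed node n is built and not pruned. -/
/-!
Why three-path merges survive pruning.

*Paths are always found, with the right root.* A provenance without re-rooting whose nodes contain
a single seed `s` has no `merge` step, since both merged trees would contain `s`. It is therefore a
chain of `grow` steps starting at `s`, and the degrees in its edge set are even except at `s` and at
its root (`even_deg`). Hence an edge set in which `n ≠ s` is a leaf can only be built with root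
`n` (`root_eq`). By induction on the number of edges, deleting the edge at the leaf `n`
(`IsNSPath.exists_erase`), every `(n,s)`-rooted path is built with root `n` (`path_built`).

*Merging.* Let `p₀, p₁, p₂` be the built paths, `p₂` the last of them. Once `p₂` exists, the
signature of `n` has three bits set, and `n` has three adjacent edges, so no merge at `n`
is pruned any more. Since no path was merged with `p₂` before `p₂` existed, `merge p₀ p₂` is built,
and then so is `merge (merge p₀ p₂) p₁` (`merge_three`).
-/

/-! Framework for formalizing connecting-tree-pattern (CTP) search algorithms
(GAM, ESP, LESP, MoESP, MoLESP) over undirected multigraphs. -/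

/-- An undirected multigraph: each edge has an unordered pair of endpoints. -/
structure Multigraph (V : Type*) (E : Type*) where
  ends : E → Sym2 V

namespace CTP

variable {V : Type*} {E : Type*}

/-- `v` is a seed: it belongs to some seed set. -/
def isSeed {m : ℕ} (S : Fin m → Set V) (v : V) : Prop := ∃ i, v ∈ S i

/-- The set of nodes touched by an edge set. -/
def nodeSet (G : Multigraph V E) (T : Finset E) : Set V := {v | ∃ e ∈ T, v ∈ G.ends e}

/-- The number of edges of `T` adjacent to `v`. -/
noncomputable def deg (G : Multigraph V E) (v : V) (T : Finset E) : ℕ :=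
  Set.ncard {e | e ∈ T ∧ v ∈ G.ends e}

/-- `v` is a leaf of the edge set `T`: it is adjacent to exactly one edge of `T`. -/
def IsLeaf (G : Multigraph V E) (T : Finset E) (v : V) : Prop := deg G v T = 1

/-- `v` has at least three adjacent edges in `G`. -/
def HasDegThree (G : Multigraph V E) (v : V) : Prop :=
  ∃ e₁ e₂ e₃ : E, e₁ ≠ e₂ ∧ e₁ ≠ e₃ ∧ e₂ ≠ e₃ ∧
    v ∈ G.ends e₁ ∧ v ∈ G.ends e₂ ∧ v ∈ G.ends e₃

/-- All nodes touched by `T` are pairwise connected by edges of `T`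
(edges are traversed in either direction). -/
def connectedEdges (G : Multigraph V E) (T : Finset E) : Prop :=
  ∀ x ∈ nodeSet G T, ∀ y ∈ nodeSet G T,
    Relation.ReflTransGen (fun a b => ∃ e ∈ T, G.ends e = s(a, b)) x y

/-- The edge set `T` forms a tree (connected and acyclic). -/
def IsTreeEdges (G : Multigraph V E) (T : Finset E) : Prop :=
  connectedEdges G T ∧ (T.Nonempty → (nodeSet G T).ncard = T.card + 1)

/-- Nodes of a rooted edge set: just the root, if there are no edges. -/
def nodesIn (G : Multigraph V E) (T : Finset E) (r : V) : Set V :=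
  {v | (T = ∅ ∧ v = r) ∨ v ∈ nodeSet G T}

/-- sat: the indices of the seed sets having a seed in the rooted edge set. -/
def satIn {m : ℕ} (G : Multigraph V E) (S : Fin m → Set V) (T : Finset E) (r : V) :
    Set (Fin m) := {i | ∃ v ∈ nodesIn G T r, v ∈ S i}

/-- A rooted tree: a set of edges plus a distinguished root node. -/
structure RTree (V : Type*) (E : Type*) where
  edges : Finset E
  root : V

/-- Nodes of a rooted tree. -/
def RTree.nodes (G : Multigraph V E) (t : RTree V E) : Set V := nodesIn G t.edges t.root

/-- The rooted tree is well-formed in `G`. -/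
def RTree.Valid (G : Multigraph V E) (t : RTree V E) : Prop :=
  IsTreeEdges G t.edges ∧ (t.edges.Nonempty → t.root ∈ nodeSet G t.edges)

/-- A CTP result: a minimal subtree of `G` containing a node from each seed set:
(i) it contains exactly one node from each `S i`, and (ii) removing any edge
disconnects it or removes some seed. -/
def IsCTPResult {m : ℕ} [DecidableEq E] (G : Multigraph V E) (S : Fin m → Set V)
    (t : RTree V E) : Prop :=
  t.Valid G ∧
  (∀ i, ∃! v, v ∈ t.nodes G ∧ v ∈ S i) ∧
  (∀ e ∈ t.edges, ¬ connectedEdges G (t.edges.erase e) ∨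
    ∃ i, ∃ v ∈ S i, v ∈ t.nodes G ∧ v ∉ nodeSet G (t.edges.erase e))

/-- The edge set `T` forms a path: a tree in which every node has degree at most 2. -/
def IsPathEdges (G : Multigraph V E) (T : Finset E) : Prop :=
  IsTreeEdges G T ∧ ∀ v ∈ nodeSet G T, deg G v T ≤ 2

/-- An `(n,s)`-rooted path: a rooted path from a seed `s` to a root node `n`,
whose only seed is `s`. -/
def IsNSPath {m : ℕ} (G : Multigraph V E) (S : Fin m → Set V) (T : Finset E)
    (n s : V) : Prop :=
  IsPathEdges G T ∧ isSeed S s ∧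
  ((T = ∅ ∧ n = s) ∨
    (T ≠ ∅ ∧ s ≠ n ∧ s ∈ nodeSet G T ∧ n ∈ nodeSet G T ∧ IsLeaf G T s ∧ IsLeaf G T n)) ∧
  (∀ v ∈ nodesIn G T n, isSeed S v → v = s)

/-- A simple edge set: a tree whose leaves are exactly its seed nodes
(all leaves are seeds, all internal nodes are non-seeds). -/
def IsSimpleEdgeSet {m : ℕ} (G : Multigraph V E) (S : Fin m → Set V) (T : Finset E) : Prop :=
  IsTreeEdges G T ∧ ∀ v ∈ nodeSet G T, (IsLeaf G T v ↔ isSeed S v)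

/-- The number of leaves of an edge set. -/
noncomputable def leafCount (G : Multigraph V E) (T : Finset E) : ℕ :=
  Set.ncard {v ∈ nodeSet G T | IsLeaf G T v}

/-- A `p`-simple edge set: a simple edge set with at most `p` leaves. -/
def pSimple {m : ℕ} (G : Multigraph V E) (S : Fin m → Set V) (T : Finset E) (p : ℕ) : Prop :=
  IsSimpleEdgeSet G S T ∧ leafCount G T ≤ p

/-- A simple tree decomposition of the edge set `T`: a set of nonempty simple
edge sets partitioning the edges of `T` (they may share leaf nodes). -/
def IsSimpleDecomp {m : ℕ} (G : Multigraph V E) (S : Fin m → Set V) (T : Finset E)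
    (θ : Set (Finset E)) : Prop :=
  (∀ P ∈ θ, P.Nonempty ∧ IsSimpleEdgeSet G S P ∧ P ⊆ T) ∧
  (∀ e ∈ T, ∃! P, P ∈ θ ∧ e ∈ P)

/-- `T` is `p`-piecewise simple: its simple tree decomposition exists and
consists of `p`-simple edge sets. -/
def IsPPS {m : ℕ} (G : Multigraph V E) (S : Fin m → Set V) (T : Finset E) (p : ℕ) : Prop :=
  ∃ θ, IsSimpleDecomp G S T θ ∧ ∀ P ∈ θ, leafCount G P ≤ p

/-- A `(u,n)` rooted merge: the rooted tree obtained by merging `u`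
`(n,sⱼ)`-rooted paths at the non-seed node `n`; the paths share no node but `n`,
and their seeds come from pairwise distinct seed sets. -/
def IsURootedMerge {m : ℕ} [DecidableEq E] (G : Multigraph V E) (S : Fin m → Set V)
    (u : ℕ) (T : Finset E) (n : V) : Prop :=
  ¬ isSeed S n ∧
  ∃ (P : Fin u → Finset E) (s : Fin u → V),
    (∀ j, IsNSPath G S (P j) n (s j)) ∧
    (∀ j k, j ≠ k → nodesIn G (P j) n ∩ nodesIn G (P k) n ⊆ {n}) ∧
    (∀ j k, j ≠ k → ∀ i, ¬ (s j ∈ S i ∧ s k ∈ S i)) ∧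
    T = Finset.univ.biUnion P

/-- Provenances: the ways the algorithms build rooted trees.
`grow t e x` grows `t` from its root along edge `e` to the new root `x`;
`merge t₁ t₂` merges two trees with the same root; `mo t r` re-roots `t`
at the seed node `r` (MoESP trees). -/
inductive Prov (V : Type*) (E : Type*) : Type _ where
  | init : V → Prov V E
  | grow : Prov V E → E → V → Prov V E
  | merge : Prov V E → Prov V E → Prov V E
  | mo : Prov V E → V → Prov V E

namespace Prov

/-- The root of (the rooted tree of) a provenance. -/
def root : Prov V E → V
  | init x => x
  | grow _ _ x => x
  | merge t₁ _ => t₁.root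
  | mo _ r => r

/-- The edge set of a provenance. -/
def edges [DecidableEq E] : Prov V E → Finset E
  | init _ => ∅
  | grow t e _ => insert e (edges t)
  | merge t₁ t₂ => edges t₁ ∪ edges t₂
  | mo t _ => edges t

/-- The node set of a provenance. -/
def nodes (G : Multigraph V E) : Prov V E → Set V
  | init x => {x}
  | grow t _ x => insert x (nodes G t)
  | merge t₁ t₂ => nodes G t₁ ∪ nodes G t₂
  | mo t _ => nodes G t

/-- The provenance contains an `mo` (MoESP re-rooting) step. -/
def hasMo : Prov V E → Prop
  | init _ => False
  | grow t _ _ => hasMo t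
  | merge t₁ t₂ => hasMo t₁ ∨ hasMo t₂
  | mo _ _ => True

/-- The top operation of the provenance is `mo`. -/
def isMoTop : Prov V E → Prop
  | mo _ _ => True
  | _ => False

/-- The top operation of the provenance is `merge` (a "Merge tree"). -/
def isMergeTop : Prov V E → Prop
  | merge _ _ => True
  | _ => False

/-- The immediate sub-provenances. -/
def children : Prov V E → List (Prov V E)
  | init _ => []
  | grow t _ _ => [t]
  | merge t₁ t₂ => [t₁, t₂]
  | mo t _ => [t]

end Prov

/-- sat of a provenance: the seed sets having a seed among its nodes. -/
def satP {m : ℕ} (G : Multigraph V E) (S : Fin m → Set V) (t : Prov V E) : Set (Fin m) :=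
  {i | ∃ v ∈ t.nodes G, v ∈ S i}

/-- The provenance (a grow or merge) has strictly more seeds than any of its children. -/
def SeedGain {m : ℕ} (G : Multigraph V E) (S : Fin m → Set V) : Prov V E → Prop
  | .init _ => False
  | .grow t e x => (satP G S t).ncard < (satP G S (.grow t e x)).ncard
  | .merge t₁ t₂ => (satP G S t₁).ncard < (satP G S (.merge t₁ t₂)).ncard ∧
      (satP G S t₂).ncard < (satP G S (.merge t₁ t₂)).ncard
  | .mo _ _ => False

/-- Validity of a provenance w.r.t. graph `G` and seed sets `S`:
* `init x` for a seed `x`;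
* `grow t e x`: `e` goes from `t`'s root to `x`, `x` is not in `t`, `x` is not a
  seed from a set in sat(`t`), `t` is not a result yet, and Grow is disabled on
  MoESP trees;
* `merge t₁ t₂`: same root, no other common node, disjoint sats;
* `mo t r`: re-rooting at a seed node `r` ≠ root, when `t` gained seeds. -/
inductive ValidProv {m : ℕ} (G : Multigraph V E) (S : Fin m → Set V) : Prov V E → Prop where
  | init {x : V} {i : Fin m} (h : x ∈ S i) : ValidProv G S (.init x)
  | grow {t : Prov V E} {e : E} {x : V} (ht : ValidProv G S t)
      (he : G.ends e = s(t.root, x)) (hx : x ∉ t.nodes G)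
      (hs : ¬ ∃ i ∈ satP G S t, x ∈ S i)
      (hnotfull : ¬ ∀ i : Fin m, i ∈ satP G S t)
      (hmo : ¬ t.hasMo) : ValidProv G S (.grow t e x)
  | merge {t₁ t₂ : Prov V E} (h₁ : ValidProv G S t₁) (h₂ : ValidProv G S t₂)
      (hr : t₁.root = t₂.root) (hn : t₁.nodes G ∩ t₂.nodes G ⊆ {t₁.root})
      (hs : satP G S t₁ ∩ satP G S t₂ = ∅) : ValidProv G S (.merge t₁ t₂)
  | mo {t : Prov V E} {r : V} (ht : ValidProv G S t) (hr : r ∈ t.nodes G)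
      (hseed : isSeed S r) (hne : r ≠ t.root) (hgain : SeedGain G S t) :
      ValidProv G S (.mo t r)

/-- The common part of an execution of the algorithms: the set `built` of all
provenances built (and kept) during the run, together with their build times.
Children of built trees were built earlier, `Init` trees are built for all
seeds, and build times are distinct. -/
structure PreRun {m : ℕ} (G : Multigraph V E) (S : Fin m → Set V) where
  built : Set (Prov V E)
  time : Prov V E → ℕ
  hvalid : ∀ t ∈ built, ValidProv G S t
  hchild : ∀ t ∈ built, ∀ c ∈ t.children, c ∈ built ∧ time c < time t
  htime : ∀ t₁ ∈ built, ∀ t₂ ∈ built, time t₁ = time t₂ → t₁ = t₂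
  hinit : ∀ x : V, isSeed S x → Prov.init x ∈ built

/-- Seed signature of node `n` at time `τ`: the seed sets `S i` such that an
`(n,sᵢ)`-rooted path from a seed `sᵢ ∈ S i` has been built before `τ`. -/
def ssAt {m : ℕ} [DecidableEq E] {G : Multigraph V E} {S : Fin m → Set V}
    (R : PreRun G S) (τ : ℕ) (n : V) : Set (Fin m) :=
  {i | ∃ p ∈ R.built, R.time p < τ ∧ p.root = n ∧
    ∃ s ∈ S i, IsNSPath G S (Prov.edges p) n s}

/-- An execution of GAM, given unbounded time: no MoESP trees; at most one
provenance per rooted tree (edge set plus root) is kept; and fairness: every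
valid Grow/Merge opportunity from built trees leads to a built provenance with
the produced rooted tree. -/
structure GAMRun {m : ℕ} [DecidableEq E] (G : Multigraph V E) (S : Fin m → Set V)
    extends PreRun G S where
  hnomo : ∀ t ∈ built, ¬ t.hasMo
  hdedup : ∀ t₁ ∈ built, ∀ t₂ ∈ built,
    Prov.edges t₁ = Prov.edges t₂ → t₁.root = t₂.root → t₁ = t₂
  hgrow : ∀ t ∈ built, ∀ e x, ValidProv G S (.grow t e x) →
    ∃ t' ∈ built, Prov.edges t' = insert e (Prov.edges t) ∧ t'.root = x
  hmerge : ∀ t₁ ∈ built, ∀ t₂ ∈ built, ValidProv G S (.merge t₁ t₂) →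
    ∃ t' ∈ built, Prov.edges t' = Prov.edges t₁ ∪ Prov.edges t₂ ∧ t'.root = t₁.root

/-- An execution of ESP (GAM with edge-set pruning): at most one provenance per
nonempty edge set is kept; fairness only guarantees some built provenance with
the produced edge set (possibly rooted elsewhere). -/
structure ESPRun {m : ℕ} [DecidableEq E] (G : Multigraph V E) (S : Fin m → Set V)
    extends PreRun G S where
  hnomo : ∀ t ∈ built, ¬ t.hasMo
  hdedup : ∀ t₁ ∈ built, ∀ t₂ ∈ built,
    Prov.edges t₁ = Prov.edges t₂ → (Prov.edges t₁).Nonempty → t₁ = t₂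
  hgrow : ∀ t ∈ built, ∀ e x, ValidProv G S (.grow t e x) →
    ∃ t' ∈ built, Prov.edges t' = insert e (Prov.edges t)
  hmerge : ∀ t₁ ∈ built, ∀ t₂ ∈ built, ValidProv G S (.merge t₁ t₂) →
    ∃ t' ∈ built, Prov.edges t' = Prov.edges t₁ ∪ Prov.edges t₂

/-- An execution of LESP (ESP with limited edge-set pruning): a duplicate
(same nonempty edge set) is kept only if it is a Merge tree rooted at a node
whose seed signature has at least 3 bits set and that has at least 3 adjacent
edges in `G`; conversely, a Merge opportunity whose root satisfies the
exemption condition at the time it is attempted is never pruned. -/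
structure LESPRun {m : ℕ} [DecidableEq E] (G : Multigraph V E) (S : Fin m → Set V)
    extends PreRun G S where
  hnomo : ∀ t ∈ built, ¬ t.hasMo
  hdedup : ∀ t₁ ∈ built, ∀ t₂ ∈ built,
    Prov.edges t₁ = Prov.edges t₂ → (Prov.edges t₁).Nonempty → time t₁ < time t₂ →
    t₂.isMergeTop ∧ 3 ≤ (ssAt toPreRun (time t₂) t₂.root).ncard ∧ HasDegThree G t₂.root
  hgrow : ∀ t ∈ built, ∀ e x, ValidProv G S (.grow t e x) →
    ∃ t' ∈ built, Prov.edges t' = insert e (Prov.edges t)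
  hmerge : ∀ t₁ ∈ built, ∀ t₂ ∈ built, ValidProv G S (.merge t₁ t₂) →
    ∃ t' ∈ built, Prov.edges t' = Prov.edges t₁ ∪ Prov.edges t₂
  hmergeExempt : ∀ t₁ ∈ built, ∀ t₂ ∈ built, ValidProv G S (.merge t₁ t₂) →
    3 ≤ (ssAt toPreRun (max (time t₁) (time t₂) + 1) t₁.root).ncard →
    HasDegThree G t₁.root → Prov.merge t₁ t₂ ∈ built

/-- An execution of MoESP (ESP plus MoESP re-rooted trees): edge-set pruning
applies only to non-`mo` trees; every valid MoESP re-rooting of a built tree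
is built. -/
structure MoESPRun {m : ℕ} [DecidableEq E] (G : Multigraph V E) (S : Fin m → Set V)
    extends PreRun G S where
  hdedup : ∀ t₁ ∈ built, ∀ t₂ ∈ built, ¬ t₁.isMoTop → ¬ t₂.isMoTop →
    Prov.edges t₁ = Prov.edges t₂ → (Prov.edges t₁).Nonempty → t₁ = t₂
  hgrow : ∀ t ∈ built, ∀ e x, ValidProv G S (.grow t e x) →
    ∃ t' ∈ built, Prov.edges t' = insert e (Prov.edges t)
  hmerge : ∀ t₁ ∈ built, ∀ t₂ ∈ built, ValidProv G S (.merge t₁ t₂) →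
    ∃ t' ∈ built, Prov.edges t' = Prov.edges t₁ ∪ Prov.edges t₂
  hmo : ∀ t ∈ built, ∀ r, ValidProv G S (.mo t r) → Prov.mo t r ∈ built

/-- An execution of MoLESP: ESP with both the MoESP and the LESP modifications. -/
structure MoLESPRun {m : ℕ} [DecidableEq E] (G : Multigraph V E) (S : Fin m → Set V)
    extends PreRun G S where
  hdedup : ∀ t₁ ∈ built, ∀ t₂ ∈ built, ¬ t₁.isMoTop → ¬ t₂.isMoTop →
    Prov.edges t₁ = Prov.edges t₂ → (Prov.edges t₁).Nonempty → time t₁ < time t₂ →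
    t₂.isMergeTop ∧ 3 ≤ (ssAt toPreRun (time t₂) t₂.root).ncard ∧ HasDegThree G t₂.root
  hgrow : ∀ t ∈ built, ∀ e x, ValidProv G S (.grow t e x) →
    ∃ t' ∈ built, Prov.edges t' = insert e (Prov.edges t)
  hmerge : ∀ t₁ ∈ built, ∀ t₂ ∈ built, ValidProv G S (.merge t₁ t₂) →
    ∃ t' ∈ built, Prov.edges t' = Prov.edges t₁ ∪ Prov.edges t₂
  hmergeExempt : ∀ t₁ ∈ built, ∀ t₂ ∈ built, ValidProv G S (.merge t₁ t₂) →
    3 ≤ (ssAt toPreRun (max (time t₁) (time t₂) + 1) t₁.root).ncard →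
    HasDegThree G t₁.root → Prov.merge t₁ t₂ ∈ built
  hmo : ∀ t ∈ built, ∀ r, ValidProv G S (.mo t r) → Prov.mo t r ∈ built

/-- The run (with built set `B`) finds the (unrooted) tree of `t`: some built
provenance has exactly its edge set (and its root, in the degenerate one-node case). -/
def Finds [DecidableEq E] (B : Set (Prov V E)) (t : RTree V E) : Prop :=
  ∃ p ∈ B, Prov.edges p = t.edges ∧ (t.edges = ∅ → p.root = t.root)

/-- The run finds the rooted tree `(T, r)`: some built provenance has exactly
this edge set and this root. -/
def FindsRooted [DecidableEq E] (B : Set (Prov V E)) (T : Finset E) (r : V) : Prop :=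
  ∃ p ∈ B, Prov.edges p = T ∧ p.root = r

end CTP

open CTP

namespace CTP

variable {V E : Type*}

/-! ### Nodes and degrees of edge sets -/

lemma nodeSet_finite (G : Multigraph V E) (T : Finset E) : (nodeSet G T).Finite := by
  have h : nodeSet G T = ⋃ e ∈ T, {v | v ∈ G.ends e} := by
    ext v; simp [nodeSet]
  rw [h]
  refine T.finite_toSet.biUnion fun e _ => ?_
  induction G.ends e with
  | _ a b => exact (Set.toFinite {a, b}).subset fun v hv => by simpa using hv

lemma mem_nodeSet_insert [DecidableEq E] {G : Multigraph V E} {T : Finset E} {e : E} {v : V} :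
    v ∈ nodeSet G (insert e T) ↔ v ∈ G.ends e ∨ v ∈ nodeSet G T := by
  simp [nodeSet]

lemma mem_nodeSet_union [DecidableEq E] {G : Multigraph V E} {T U : Finset E} {v : V} :
    v ∈ nodeSet G (T ∪ U) ↔ v ∈ nodeSet G T ∨ v ∈ nodeSet G U := by
  simp only [nodeSet, Finset.mem_union, Set.mem_ofPred_eq]
  grind

lemma nodeSet_empty (G : Multigraph V E) : nodeSet G ∅ = ∅ := by
  simp [nodeSet]

open Classical in
lemma deg_insert [DecidableEq E] (G : Multigraph V E) {T : Finset E} {e : E} (he : e ∉ T) (v : V) :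
    deg G v (insert e T) = deg G v T + if v ∈ G.ends e then 1 else 0 := by
  have key : ∀ U : Finset E, deg G v U = (U.filter fun e => v ∈ G.ends e).card := fun U => by
    rw [← Set.ncard_coe_finset]; simp [deg]
  rw [key, key, Finset.filter_insert]
  split_ifs with h
  · rw [Finset.card_insert_of_notMem (by simp [he])]
  · rfl

lemma deg_pos_iff {G : Multigraph V E} {T : Finset E} {v : V} :
    0 < deg G v T ↔ v ∈ nodeSet G T := by
  rw [deg, Set.ncard_pos (T.finite_toSet.subset fun e he => he.1)]
  rfl

/-! ### Nodes and degrees of provenances -/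

section Provenances

variable {m : ℕ} {G : Multigraph V E} {S : Fin m → Set V}

lemma ValidProv.root_mem {t : Prov V E} (h : ValidProv G S t) : t.root ∈ t.nodes G := by
  induction h with
  | init h => simp [Prov.root, Prov.nodes]
  | grow => simp [Prov.root, Prov.nodes]
  | merge _ _ _ _ _ ih _ => exact Or.inl ih
  | mo _ hr => exact hr

lemma ValidProv.exists_sat {t : Prov V E} (h : ValidProv G S t) : ∃ i, i ∈ satP G S t := by
  induction h with
  | @init x i h => exact ⟨i, x, rfl, h⟩
  | grow _ _ _ _ _ _ ih =>
    obtain ⟨i, v, hv, hi⟩ := ih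
    exact ⟨i, v, Or.inr hv, hi⟩
  | merge _ _ _ _ _ ih _ =>
    obtain ⟨i, v, hv, hi⟩ := ih
    exact ⟨i, v, Or.inl hv, hi⟩
  | mo _ _ _ _ _ ih => exact ih

/-- The node set carried by a provenance is that of its rooted edge set. -/
lemma ValidProv.mem_nodes [DecidableEq E] {t : Prov V E} (h : ValidProv G S t) :
    ∀ v, v ∈ t.nodes G ↔ v ∈ nodesIn G (Prov.edges t) t.root := by
  induction h with
  | init h => intro v; simp [nodesIn, Prov.nodes, Prov.edges, Prov.root, nodeSet_empty]
  | @grow t e x ht he hx hs hn hm ih =>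
    intro v
    have hroot := ht.root_mem
    simp only [nodesIn, Set.mem_ofPred_eq] at ih
    simp only [nodesIn, Prov.nodes, Prov.edges, Prov.root, Set.mem_ofPred_eq, Set.mem_insert_iff,
      mem_nodeSet_insert, he, Sym2.mem_iff, Finset.insert_ne_empty, false_and, false_or, ih]
    grind
  | @merge t₁ t₂ h₁ h₂ hr hn hs ih₁ ih₂ =>
    intro v
    have r₁ := (ih₁ _).1 h₁.root_mem
    have r₂ := (ih₂ _).1 h₂.root_mem
    simp only [nodesIn, Set.mem_ofPred_eq] at ih₁ ih₂ r₁ r₂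
    simp only [nodesIn, Prov.nodes, Prov.edges, Prov.root, Set.mem_ofPred_eq, Set.mem_union,
      mem_nodeSet_union, Finset.union_eq_empty, ih₁, ih₂]
    by_cases e₁ : Prov.edges t₁ = ∅ <;> by_cases e₂ : Prov.edges t₂ = ∅ <;>
      simp_all [nodeSet_empty]
  | @mo t r ht hr hseed hne hgain ih =>
    intro v
    have := (ih r).1 hr
    simp only [nodesIn, Set.mem_ofPred_eq] at ih this
    simp only [nodesIn, Prov.nodes, Prov.edges, Prov.root, Set.mem_ofPred_eq, ih]
    by_cases e₁ : Prov.edges t = ∅ <;> simp_all [nodeSet_empty]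

open Classical in
/-- A one-seed provenance is a chain of `grow` steps from its seed `s`, so the odd-degree nodes of
its edge set are exactly `s` and the root (and there are none if the two coincide). -/
lemma ValidProv.even_deg [DecidableEq E] {s : V} {t : Prov V E} (h : ValidProv G S t) (hmo : ¬ t.hasMo)
    (hs : ∀ v ∈ t.nodes G, isSeed S v → v = s) (v : V) :
    Even (deg G v (Prov.edges t) + (if v = s then 1 else 0) + (if v = t.root then 1 else 0)) := by
  induction h with
  | @init x i h =>
    have : x = s := hs x rfl ⟨i, h⟩
    subst this
    have : deg G v (∅ : Finset E) = 0 := by simp [deg]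
    simp only [Prov.edges, Prov.root, this]
    by_cases hv : v = x <;> simp [hv]
  | @grow t e x ht he hx hsat hn hm ih =>
    have ih := ih hm fun v hv => hs v (Or.inr hv)
    have hxr : t.root ≠ x := fun h => hx (h ▸ ht.root_mem)
    have heT : e ∉ Prov.edges t := fun h =>
      hx ((ht.mem_nodes x).2 (Or.inr ⟨e, h, by simp [he]⟩))
    have hd := deg_insert G heT v
    rw [he] at hd
    simp only [Prov.edges, Prov.root]
    simp only [Sym2.mem_iff] at hd
    rw [hd]
    grind
  | @merge t₁ t₂ h₁ h₂ hr hn hsat ih₁ ih₂ =>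
    exfalso
    obtain ⟨i, a, ha, hi⟩ := h₁.exists_sat
    obtain ⟨j, b, hb, hj⟩ := h₂.exists_sat
    have ea := hs a (Or.inl ha) ⟨i, hi⟩
    have eb := hs b (Or.inr hb) ⟨j, hj⟩
    subst ea
    subst eb
    exact (Set.eq_empty_iff_forall_notMem.1 hsat i) ⟨⟨b, ha, hi⟩, ⟨b, hb, hi⟩⟩
  | mo => exact absurd trivial hmo

end Provenances

variable [DecidableEq E] {m : ℕ} {G : Multigraph V E} {S : Fin m → Set V}

lemma ValidProv.mem_nodes_of_ne {t : Prov V E} (h : ValidProv G S t)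
    (hT : Prov.edges t ≠ ∅) (r : V) : t.nodes G = nodesIn G (Prov.edges t) r := by
  ext v
  simp [h.mem_nodes v, nodesIn, hT]

/-- A nonempty `(n,s)`-rooted path can only be built with root `n`. -/
lemma ValidProv.root_eq {t : Prov V E} (h : ValidProv G S t) (hmo : ¬ t.hasMo) {n s : V}
    (hp : IsNSPath G S (Prov.edges t) n s) (hT : Prov.edges t ≠ ∅) : t.root = n := by
  classical
  obtain ⟨-, -, h3 | ⟨-, hsn, -, -, -, hleaf⟩, h4⟩ := hp
  · exact absurd h3.1 hT
  have := h.even_deg hmo (s := s) (by rwa [h.mem_nodes_of_ne hT n]) n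
  replace hleaf : deg G n (Prov.edges t) = 1 := hleaf
  rw [hleaf] at this
  by_contra hne
  simp [Ne.symm hsn, Ne.symm hne] at this

/-! ### Rooted paths -/

/-- Deleting the edge at the root leaf `n` of a nonempty rooted path leaves a path rooted at the
neighbour `u` of `n`. -/
lemma IsNSPath.exists_erase {T : Finset E} {n s : V} (h : IsNSPath G S T n s) (hT : T ≠ ∅) :
    ∃ e ∈ T, ∃ u, G.ends e = s(u, n) ∧ u ≠ n ∧ IsNSPath G S (T.erase e) u s ∧
      n ∉ nodesIn G (T.erase e) u := by
  classical
  obtain ⟨⟨⟨hconn, hcard⟩, hdeg⟩, hseed, h3 | ⟨-, hsn, hsT, hnT, hsl, hnl⟩, honly⟩ := h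
  · exact absurd h3.1 hT
  have hnT' := hnT
  obtain ⟨e, heT, hne⟩ := hnT'
  obtain ⟨u, hu⟩ := hne
  have hu : G.ends e = s(u, n) := hu.trans Sym2.eq_swap
  have hins : insert e (T.erase e) = T := Finset.insert_erase heT
  have hdegT : ∀ v, deg G v T = deg G v (T.erase e) + if v ∈ G.ends e then 1 else 0 := fun v => by
    have := deg_insert G (Finset.notMem_erase e T) v
    rwa [hins] at this
  have hnE : n ∉ nodeSet G (T.erase e) := by
    rw [← deg_pos_iff]
    have := hdegT n
    rw [IsLeaf] at hnl
    rw [hnl, if_pos (by simp [hu])] at this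
    omega
  have hnodes : ∀ v, v ∈ nodeSet G T ↔ (v = u ∨ v = n) ∨ v ∈ nodeSet G (T.erase e) := fun v => by
    rw [← hins, mem_nodeSet_insert, hu, Sym2.mem_iff, Finset.erase_insert_eq_erase,
      Finset.erase_idem]
  -- a loop at the leaf `n` would cut `n` off from `s`
  have hun : u ≠ n := by
    rintro rfl
    have key : ∀ y, Relation.ReflTransGen (fun a b => ∃ e ∈ T, G.ends e = s(a, b)) u y →
        y = u := by
      intro y hy
      induction hy with
      | refl => rfl
      | @tail b c _ hbc ih =>
        subst ih
        obtain ⟨f, hf, hfe⟩ := hbc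
        by_cases hef : f = e
        · subst hef
          rw [hu] at hfe
          simpa using hfe.symm
        · exact absurd ⟨f, Finset.mem_erase.2 ⟨hef, hf⟩, by simp [hfe]⟩ hnE
    exact hsn (key s (hconn u hnT s hsT))
  -- contracting the edge `e` moves every walk of `T` into `T.erase e`
  have hlift : ∀ x y, x ≠ n → y ≠ n → x ∈ nodeSet G T → y ∈ nodeSet G T →
      Relation.ReflTransGen (fun a b => ∃ f ∈ T.erase e, G.ends f = s(a, b)) x y := by
    intro x y hx hy hxT hyT
    have key : ∀ z, Relation.ReflTransGen (fun a b => ∃ e ∈ T, G.ends e = s(a, b)) x z →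
        Relation.ReflTransGen (fun a b => ∃ f ∈ T.erase e, G.ends f = s(a, b)) x
          (if z = n then u else z) := by
      intro z hz
      induction hz with
      | refl => rw [if_neg hx]
      | @tail b c _ hbc ih =>
        obtain ⟨f, hf, hfe⟩ := hbc
        by_cases hef : f = e
        · subst hef
          rw [hu] at hfe
          have : (if c = n then u else c) = (if b = n then u else b) := by
            rcases Sym2.eq_iff.1 hfe with ⟨rfl, rfl⟩ | ⟨rfl, rfl⟩ <;> simp
          rwa [this]
        · have hf' : f ∈ T.erase e := Finset.mem_erase.2 ⟨hef, hf⟩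
          have hb : b ≠ n := fun h => hnE ⟨f, hf', by simp [hfe, h]⟩
          have hc : c ≠ n := fun h => hnE ⟨f, hf', by simp [hfe, h]⟩
          rw [if_neg hb] at ih
          rw [if_neg hc]
          exact ih.tail ⟨f, hf', hfe⟩
    have := key y (hconn x hxT y hyT)
    rwa [if_neg hy] at this
  have huT : u ∈ nodeSet G T := (hnodes u).2 (Or.inl (Or.inl rfl))
  have hsub : ∀ v, v ∈ nodeSet G (T.erase e) → v ∈ nodeSet G T := fun v hv =>
    (hnodes v).2 (Or.inr hv)
  refine ⟨e, heT, u, hu, hun, ?_, ?_⟩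
  swap
  · rintro (⟨-, h⟩ | h)
    · exact hun h.symm
    · exact hnE h
  have honly' : ∀ v ∈ nodesIn G (T.erase e) u, isSeed S v → v = s := by
    rintro v (⟨-, rfl⟩ | hv) hvs
    · exact honly v (Or.inr huT) hvs
    · exact honly v (Or.inr (hsub v hv)) hvs
  have hconn' : connectedEdges G (T.erase e) := fun x hx y hy =>
    hlift x y (fun h => hnE (h ▸ hx)) (fun h => hnE (h ▸ hy)) (hsub x hx) (hsub y hy)
  have hdeg' : ∀ v ∈ nodeSet G (T.erase e), deg G v (T.erase e) ≤ 2 := fun v hv => by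
    have h1 := hdeg v (hsub v hv)
    have h2 := hdegT v
    omega
  by_cases hE : T.erase e = ∅
  · refine ⟨⟨⟨hconn', fun h => absurd hE h.ne_empty⟩, hdeg'⟩, hseed, Or.inl ⟨hE, ?_⟩, honly'⟩
    rcases (hnodes s).1 hsT with (h | h) | h
    · exact h.symm
    · exact absurd h hsn
    · rw [hE, nodeSet_empty] at h; exact h.elim
  · have huE : u ∈ nodeSet G (T.erase e) := by
      obtain ⟨f, hf⟩ := Finset.nonempty_iff_ne_empty.2 hE
      have hx : (Quot.out (G.ends f)).1 ∈ nodeSet G (T.erase e) :=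
        ⟨f, hf, Sym2.out_fst_mem _⟩
      generalize (Quot.out (G.ends f)).1 = x at hx
      have := hlift u x hun (fun h => hnE (h ▸ hx)) huT (hsub x hx)
      rcases this.cases_head with h | ⟨c, ⟨g, hg, hge⟩, -⟩
      · rwa [h]
      · exact ⟨g, hg, by simp [hge]⟩
    have hdu := hdegT u
    rw [if_pos (by simp [hu])] at hdu
    have hu1 := deg_pos_iff.2 huE
    have hu2 := hdeg u huT
    have hsu : s ≠ u := by
      rintro rfl
      rw [IsLeaf] at hsl
      omega
    have hds := hdegT s
    rw [if_neg (by simp [hu, hsu, hsn]), add_zero] at hds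
    refine ⟨⟨⟨hconn', fun _ => ?_⟩, hdeg'⟩, hseed, Or.inr ⟨hE, hsu, ?_, huE, ?_, ?_⟩, honly'⟩
    · have h1 := hcard ⟨e, heT⟩
      have h2 : nodeSet G T = insert n (nodeSet G (T.erase e)) := by
        ext v
        rw [hnodes, Set.mem_insert_iff]
        constructor
        · rintro ((rfl | h) | h)
          · exact Or.inr huE
          · exact Or.inl h
          · exact Or.inr h
        · rintro (h | h)
          · exact Or.inl (Or.inr h)
          · exact Or.inr h
      rw [h2, Set.ncard_insert_of_notMem hnE (nodeSet_finite G _)] at h1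
      have h3 := Finset.card_erase_add_one heT
      omega
    · rw [← deg_pos_iff, ← hds]
      exact deg_pos_iff.2 hsT
    · rw [IsLeaf, ← hds]; exact hsl
    · rw [IsLeaf]; omega

/-- Every `(n,s)`-rooted path is built with root `n`, as long as `s` alone does not cover all seed
sets (in which case `grow` would be disabled). -/
lemma path_built (R : LESPRun G S) {s : V} (hs : ∃ i, s ∉ S i) :
    ∀ (k : ℕ) (T : Finset E) (n : V), T.card = k → IsNSPath G S T n s →
      ∃ p ∈ R.built, Prov.edges p = T ∧ p.root = n := by
  intro k
  induction k with
  | zero =>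
    intro T n hk hp
    have hT : T = ∅ := Finset.card_eq_zero.1 hk
    obtain ⟨-, hseed, ⟨-, rfl⟩ | h, -⟩ := hp
    · exact ⟨_, R.hinit n hseed, hT.symm, rfl⟩
    · exact absurd hT h.1
  | succ k ih =>
    intro T n hk hp
    have hT : T ≠ ∅ := by rintro rfl; simp at hk
    obtain ⟨e, heT, u, hu, -, hp', hn⟩ := hp.exists_erase hT
    obtain ⟨t, ht, hte, htr⟩ := ih (T.erase e) u
      (by rw [Finset.card_erase_of_mem heT, hk]; rfl) hp'
    have hv := R.hvalid t ht
    have hnod : ∀ v, v ∈ t.nodes G ↔ v ∈ nodesIn G (T.erase e) u := fun v => by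
      rw [hv.mem_nodes, hte, htr]
    have hgrow : ValidProv G S (.grow t e n) := by
      refine .grow hv (by rw [htr, hu]) (by rwa [hnod]) ?_ ?_ (R.hnomo t ht)
      · rintro ⟨i, -, hi⟩
        obtain ⟨-, -, h | h, h4⟩ := hp
        · exact hT h.1
        · exact h.2.1 (h4 n (Or.inr h.2.2.2.1) ⟨i, hi⟩).symm
      · intro hall
        obtain ⟨i, hi⟩ := hs
        obtain ⟨v, hvn, hvi⟩ := hall i
        exact hi (hp'.2.2.2 v ((hnod v).1 hvn) ⟨i, hvi⟩ ▸ hvi)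
    obtain ⟨t', ht', he'⟩ := R.hgrow t ht e n hgrow
    rw [hte, Finset.insert_erase heT] at he'
    exact ⟨t', ht', he',
      (R.hvalid t' ht').root_eq (R.hnomo t' ht') (by rwa [he']) (by rwa [he'])⟩

/-! ### Merging three trees -/

/-- Three pairwise mergeable built trees rooted at `n`, `c` being the last one built, are merged
into a built tree rooted at `n`, if three bits of the signature of `n` are set as soon as `c`
is built. -/
lemma merge_three (R : LESPRun G S) {n : V} {a b c : Prov V E}
    (ha : a ∈ R.built) (hb : b ∈ R.built) (hc : c ∈ R.built)
    (ra : a.root = n) (rb : b.root = n) (rc : c.root = n)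
    (nab : a.nodes G ∩ b.nodes G ⊆ {n}) (nac : a.nodes G ∩ c.nodes G ⊆ {n})
    (nbc : b.nodes G ∩ c.nodes G ⊆ {n})
    (sab : satP G S a ∩ satP G S b = ∅) (sac : satP G S a ∩ satP G S c = ∅)
    (sbc : satP G S b ∩ satP G S c = ∅)
    (hss : ∀ τ, R.time c < τ → 3 ≤ (ssAt R.toPreRun τ n).ncard) (hdeg : HasDegThree G n) :
    FindsRooted R.built (Prov.edges a ∪ Prov.edges b ∪ Prov.edges c) n := by
  have v1 : ValidProv G S (.merge a c) :=
    .merge (R.hvalid a ha) (R.hvalid c hc) (ra.trans rc.symm) (by rwa [ra]) sac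
  have b1 := R.hmergeExempt a ha c hc v1 (by rw [ra]; exact hss _ (by omega)) (by rwa [ra])
  have t1 : R.time c < R.time (.merge a c) := (R.hchild _ b1 c (by simp [Prov.children])).2
  have v2 : ValidProv G S (.merge (.merge a c) b) := by
    refine .merge v1 (R.hvalid b hb) (ra.trans rb.symm) ?_ ?_
    · rintro v ⟨h1 | h1, h2⟩
      · exact (nab ⟨h1, h2⟩ : v = n).trans ra.symm
      · exact (nbc ⟨h2, h1⟩ : v = n).trans ra.symm
    · refine Set.eq_empty_iff_forall_notMem.2 ?_
      rintro i ⟨⟨v, h1 | h1, hi⟩, h2⟩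
      · exact Set.eq_empty_iff_forall_notMem.1 sab i ⟨⟨v, h1, hi⟩, h2⟩
      · exact Set.eq_empty_iff_forall_notMem.1 sbc i ⟨h2, ⟨v, h1, hi⟩⟩
  have b2 := R.hmergeExempt _ b1 b hb v2
    (by rw [show (Prov.merge a c).root = n from ra]; exact hss _ (by omega))
    (by rwa [show (Prov.merge a c).root = n from ra])
  exact ⟨_, b2, by simp only [Prov.edges]; exact Finset.union_right_comm _ _ _, ra⟩

end CTP

/-- any `(3,n)` rooted merge is guaranteed to be found by LESP:
regardless of the execution order, at least one provenance for the rooted tree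
obtained by merging three `(n,sᵢ)`-rooted paths at the non-seed node `n` is
built and not pruned. -/
theorem lesp_finds_three_rooted_merges {V E : Type*} [DecidableEq E] {m : ℕ}
    (G : Multigraph V E) (S : Fin m → Set V) (R : LESPRun G S)
    (T : Finset E) (n : V) (h : IsURootedMerge G S 3 T n) :
    FindsRooted R.built T n := by
  obtain ⟨hn, P, s, hP, hdis, hsd, rfl⟩ := h
  have hPne : ∀ j, P j ≠ ∅ := by
    intro j hj
    obtain ⟨-, hseed, ⟨-, h⟩ | h, -⟩ := hP j
    · exact hn (h ▸ hseed)
    · exact h.1 hj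
  have hseed : ∀ j, isSeed S (s j) := fun j => (hP j).2.1
  choose ι hι using hseed
  have hnot : ∀ j, ∃ i, s j ∉ S i := fun j =>
    ⟨ι (j + 1), fun h => hsd j (j + 1) (by fin_cases j <;> decide) _ ⟨h, hι _⟩⟩
  choose p hp hpe hpr using fun j => path_built R (hnot j) _ (P j) n rfl (hP j)
  have hnod : ∀ j, (p j).nodes G = nodesIn G (P j) n := fun j => by
    ext v; rw [(R.hvalid _ (hp j)).mem_nodes, hpe, hpr]
  have hND : ∀ j k, j ≠ k → (p j).nodes G ∩ (p k).nodes G ⊆ {n} := fun j k hjk => by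
    rw [hnod, hnod]; exact hdis j k hjk
  have hSD : ∀ j k, j ≠ k → satP G S (p j) ∩ satP G S (p k) = ∅ := fun j k hjk => by
    refine Set.eq_empty_iff_forall_notMem.2 ?_
    rintro i ⟨⟨v, hv, hvi⟩, ⟨w, hw, hwi⟩⟩
    rw [hnod] at hv hw
    have e1 := (hP j).2.2.2 v hv ⟨i, hvi⟩
    have e2 := (hP k).2.2.2 w hw ⟨i, hwi⟩
    exact hsd j k hjk i ⟨e1 ▸ hvi, e2 ▸ hwi⟩
  have hιinj : Function.Injective ι := fun j k hjk => by
    by_contra hne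
    exact hsd j k hne (ι j) ⟨hι j, hjk ▸ hι k⟩
  have hss : ∀ τ, (∀ j, R.time (p j) < τ) → 3 ≤ (ssAt R.toPreRun τ n).ncard := by
    intro τ hτ
    have hsub : Set.range ι ⊆ ssAt R.toPreRun τ n := by
      rintro _ ⟨j, rfl⟩
      exact ⟨p j, hp j, hτ j, hpr j, s j, hι j, by rw [hpe]; exact hP j⟩
    calc 3 = (Set.range ι).ncard := by
          rw [← Set.image_univ, Set.ncard_image_of_injective _ hιinj, Set.ncard_univ]; simp
      _ ≤ _ := Set.ncard_le_ncard hsub (Set.toFinite _)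
  have hdeg : HasDegThree G n := by
    have hnP : ∀ j, ∃ e ∈ P j, ∃ u, G.ends e = s(u, n) ∧ u ≠ n := fun j => by
      obtain ⟨e, he, u, hu, hun, -⟩ := (hP j).exists_erase (hPne j)
      exact ⟨e, he, u, hu, hun⟩
    choose e he u hu hun using hnP
    have hne : ∀ j k, j ≠ k → e j ≠ e k := fun j k hjk hjk' => by
      have h1 : u j ∈ nodesIn G (P j) n := Or.inr ⟨e j, he j, by simp [hu]⟩
      have h2 : u j ∈ nodesIn G (P k) n := Or.inr ⟨e k, he k, by rw [← hjk']; simp [hu]⟩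
      exact hun j (hdis j k hjk ⟨h1, h2⟩)
    exact ⟨e 0, e 1, e 2, hne _ _ (by decide), hne _ _ (by decide), hne _ _ (by decide),
      by simp [hu], by simp [hu], by simp [hu]⟩
  have main : ∀ i j k : Fin 3, i ≠ j → i ≠ k → j ≠ k → (∀ l, l = i ∨ l = j ∨ l = k) →
      R.time (p i) ≤ R.time (p k) → R.time (p j) ≤ R.time (p k) →
      FindsRooted R.built (Finset.univ.biUnion P) n := by
    intro i j k hij hik hjk hall hi hj
    have := merge_three R (hp i) (hp j) (hp k) (hpr i) (hpr j) (hpr k) (hND i j hij) (hND i k hik)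
      (hND j k hjk) (hSD i j hij) (hSD i k hik) (hSD j k hjk)
      (fun τ hτ => hss τ fun l => by rcases hall l with rfl | rfl | rfl <;> omega) hdeg
    rw [hpe, hpe, hpe] at this
    convert this using 1
    ext x
    simp only [Finset.mem_biUnion, Finset.mem_univ, true_and, Finset.mem_union]
    constructor
    · rintro ⟨l, hl⟩
      rcases hall l with rfl | rfl | rfl <;> tauto
    · rintro ((h | h) | h) <;> exact ⟨_, h⟩
  rcases le_total (R.time (p 0)) (R.time (p 1)) with h01 | h01 <;>
  rcases le_total (R.time (p 1)) (R.time (p 2)) with h12 | h12 <;>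
  rcases le_total (R.time (p 0)) (R.time (p 2)) with h02 | h02
  all_goals first
    | exact main 0 1 2 (by decide) (by decide) (by decide) (by decide) (by omega) (by omega)
    | exact main 0 2 1 (by decide) (by decide) (by decide) (by decide) (by omega) (by omega)
    | exact main 1 2 0 (by decide) (by decide) (by decide) (by decide) (by omega) (by omega)
end

section
/- For any integer u ≥ 3 and any non-seed node n, any (u,n) rooted merge is guaranteed to be found by the LESP algorithm, regardless of the execution order. -/
open CTP

namespace CTP

variable {V E : Type*} {m : ℕ} {G : Multigraph V E} {S : Fin m → Set V}

theorem IsLeaf.edge_unique {T : Finset E} {v : V} (h : IsLeaf G T v) {e f : E}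
    (he : e ∈ T) (hf : f ∈ T) (hve : v ∈ G.ends e) (hvf : v ∈ G.ends f) : e = f := by
  obtain ⟨a, ha⟩ := Set.ncard_eq_one.1 h
  have h1 : e ∈ {e | e ∈ T ∧ v ∈ G.ends e} := ⟨he, hve⟩
  have h2 : f ∈ {e | e ∈ T ∧ v ∈ G.ends e} := ⟨hf, hvf⟩
  rw [ha] at h1 h2
  exact h1.trans h2.symm

theorem eq_or_eq_of_deg_le_two {T : Finset E} {v : V} (h : deg G v T ≤ 2) {e f g : E}
    (he : e ∈ T) (hf : f ∈ T) (hg : g ∈ T) (hve : v ∈ G.ends e) (hvf : v ∈ G.ends f)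
    (hvg : v ∈ G.ends g) (hef : e ≠ f) : g = e ∨ g = f := by
  by_contra! hc
  have hfin : {e | e ∈ T ∧ v ∈ G.ends e}.Finite := T.finite_toSet.subset fun _ h => h.1
  have h3 : ({e, f, g} : Set E).ncard = 3 :=
    Set.ncard_eq_three.2 ⟨e, f, g, hef, hc.1.symm, hc.2.symm, rfl⟩
  have : ({e, f, g} : Set E) ⊆ {e | e ∈ T ∧ v ∈ G.ends e} := by
    rintro x (rfl | rfl | rfl) <;> exact ⟨‹_›, ‹_›⟩
  have := Set.ncard_le_ncard this hfin
  unfold deg at h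
  omega

/-- Reachability by edges of `T` leaves a node set only through an edge of `T`. -/
theorem exists_exit {T : Finset E} {A : Set V} {x y : V}
    (h : Relation.ReflTransGen (fun a b => ∃ e ∈ T, G.ends e = s(a, b)) x y)
    (hx : x ∈ A) (hy : y ∉ A) : ∃ e ∈ T, ∃ a ∈ A, ∃ b ∉ A, G.ends e = s(a, b) := by
  induction h with
  | refl => exact absurd hx hy
  | @tail b c _ hbc ih =>
    obtain ⟨e, he, hebc⟩ := hbc
    by_cases hb : b ∈ A
    · exact ⟨e, he, b, hb, c, hy, hebc⟩
    · exact ih hb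

variable [DecidableEq E]

/-- A valid provenance without `mo` steps has as nodes its root and the endpoints of its edges; its
root is joined by an edge to another node unless there are no edges; and it contains a seed. -/
theorem Prov.wf {t : Prov V E} (ht : ValidProv G S t) (hm : ¬ t.hasMo) :
    (∀ v, v ∈ t.nodes G ↔ v = t.root ∨ v ∈ nodeSet G t.edges) ∧
    (t.edges.Nonempty → ∃ e ∈ t.edges, ∃ x, x ≠ t.root ∧ G.ends e = s(x, t.root)) ∧
    ∃ v ∈ t.nodes G, isSeed S v := by
  induction ht with
  | @init x i h =>
    refine ⟨?_, ?_, x, ?_, i, h⟩ <;> simp [Prov.nodes, Prov.edges, Prov.root, nodeSet]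
  | @grow t e x ht he hx hs hf hmo ih =>
    obtain ⟨h1, h2, v, hv, hvs⟩ := ih hmo
    have hr : t.root ∈ t.nodes G := (h1 _).2 (Or.inl rfl)
    refine ⟨?_, ?_, v, Or.inr hv, hvs⟩
    · intro w
      have hN : w ∈ nodeSet G (insert e t.edges) ↔ (w = t.root ∨ w = x) ∨ w ∈ nodeSet G t.edges := by
        simp only [nodeSet, Set.mem_ofPred_eq, Finset.mem_insert, exists_eq_or_imp, he,
          Sym2.mem_iff]
      simp only [Prov.nodes, Prov.edges, Prov.root, Set.mem_insert_iff, hN, h1 w]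
      grind
    · intro _
      refine ⟨e, Finset.mem_insert_self _ _, t.root, ?_, he⟩
      intro h
      have h' : t.root = x := h
      exact hx (h' ▸ hr)
  | @merge t₁ t₂ ht₁ ht₂ hr hn hs ih₁ ih₂ =>
    simp only [Prov.hasMo, not_or] at hm
    obtain ⟨a1, a2, v, hv, hvs⟩ := ih₁ hm.1
    obtain ⟨b1, b2, -⟩ := ih₂ hm.2
    refine ⟨?_, ?_, v, Or.inl hv, hvs⟩
    · intro w
      have : w ∈ nodeSet G (t₁.edges ∪ t₂.edges) ↔
          w ∈ nodeSet G t₁.edges ∨ w ∈ nodeSet G t₂.edges := by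
        simp only [nodeSet, Set.mem_ofPred_eq, Finset.mem_union, or_and_right, exists_or]
      simp only [Prov.nodes, Prov.edges, Prov.root, Set.mem_union, this, a1 w, b1 w, ← hr]
      grind
    · intro h
      simp only [Prov.edges, Finset.union_nonempty] at h
      rcases h with h | h
      · obtain ⟨e, he, x, hx⟩ := a2 h
        exact ⟨e, Finset.mem_union_left _ he, x, hx⟩
      · obtain ⟨e, he, x, hx⟩ := b2 h
        rw [← hr] at hx
        exact ⟨e, Finset.mem_union_right _ he, x, hx⟩
  | mo => simp [Prov.hasMo] at hm

/-- A provenance with a single seed `s` has no Merge step (both parts would contain `s`), so it is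
a chain of Grow steps from `s`, and its inner nodes have at least two edges. -/
theorem two_edges {t : Prov V E} (ht : ValidProv G S t) (hm : ¬ t.hasMo) {s : V}
    (hs : ∀ v ∈ t.nodes G, isSeed S v → v = s) {w : V} (hw : w ∈ t.nodes G)
    (hws : w ≠ s) (hwr : w ≠ t.root) :
    ∃ e ∈ t.edges, ∃ f ∈ t.edges, e ≠ f ∧ w ∈ G.ends e ∧ w ∈ G.ends f := by
  induction ht with
  | init h => exact absurd hw hwr
  | @grow t e x ht he hx hs' hf hmo ih =>
    obtain ⟨h1, h2, v, hv, hvs⟩ := Prov.wf ht hmo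
    have hwt : w ∈ t.nodes G := hw.resolve_left hwr
    by_cases hwt' : w = t.root
    · have hne : t.edges.Nonempty := by
        rw [Finset.nonempty_iff_ne_empty]
        intro h0
        have hv' := (h1 v).1 hv
        simp only [h0, nodeSet, Finset.notMem_empty, false_and, exists_false, Set.ofPred_false,
          Set.mem_empty_iff_false, or_false] at hv'
        exact hws (by rw [hwt', ← hv']; exact hs v (Or.inr hv) hvs)
      obtain ⟨f, hf, y, hy, hfy⟩ := h2 hne
      refine ⟨f, Finset.mem_insert_of_mem hf, e, Finset.mem_insert_self _ _, ?_, ?_, ?_⟩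
      · rintro rfl
        exact hx ((h1 x).2 (Or.inr ⟨f, hf, by simp [he]⟩))
      · simp [hfy, hwt']
      · simp [he, hwt']
    · obtain ⟨a, ha, b, hb, h⟩ := ih hmo (fun v hv => hs v (Or.inr hv)) hwt hwt'
      exact ⟨a, Finset.mem_insert_of_mem ha, b, Finset.mem_insert_of_mem hb, h⟩
  | @merge t₁ t₂ ht₁ ht₂ hr hn hs' ih₁ ih₂ =>
    exfalso
    simp only [Prov.hasMo, not_or] at hm
    obtain ⟨-, -, v, hv, hvs⟩ := Prov.wf ht₁ hm.1
    obtain ⟨-, -, v', hv', hvs'⟩ := Prov.wf ht₂ hm.2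
    have e1 := hs v (Or.inl hv) hvs
    have e2 := hs v' (Or.inr hv') hvs'
    subst e1
    subst e2
    obtain ⟨i, hi⟩ := hvs
    have : i ∈ satP G S t₁ ∩ satP G S t₂ := ⟨⟨v', hv, hi⟩, ⟨v', hv', hi⟩⟩
    rw [hs'] at this
    exact this
  | mo => simp [Prov.hasMo] at hm

/-- The induction behind `nsPath_built`: a built `t`, all of whose nodes except the root are
saturated (have all their `P`-edges in `t`), is a prefix of the path `P`, and is extended edge by
edge until the root is `n`. -/
theorem nsPath_built_aux (R : LESPRun G S) {P : Finset E} {n s : V} (hP : IsNSPath G S P n s)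
    (hn : ¬ isSeed S n) (hfull : ∃ i, s ∉ S i) (d : ℕ) :
    ∀ t ∈ R.built, t.edges ⊆ P → t.root ∈ nodeSet G P →
      (∀ w ∈ t.nodes G, w ≠ t.root → ∀ e ∈ P, w ∈ G.ends e → e ∈ t.edges) →
      (P \ t.edges).card = d → ∃ p ∈ R.built, p.edges = P ∧ p.root = n := by
  obtain ⟨⟨⟨hconn, -⟩, hdeg⟩, hsS, hcase, honly⟩ := hP
  rcases hcase with ⟨-, rfl⟩ | ⟨hne, hsn, hsP, hnP, hsl, hnl⟩
  · exact absurd hsS hn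
  induction d using Nat.strong_induction_on with
  | _ d IH =>
    intro t ht htP hroot hsat hd
    have hmo := R.hnomo t ht
    obtain ⟨h1, h2, v, hv, hvs⟩ := Prov.wf (R.hvalid t ht) hmo
    have hsub : ∀ w ∈ t.nodes G, w ∈ nodeSet G P := by
      intro w hw
      rcases (h1 w).1 hw with rfl | ⟨e, he, hwe⟩
      · exact hroot
      · exact ⟨e, htP he, hwe⟩
    have hseed : ∀ w ∈ t.nodes G, isSeed S w → w = s := fun w hw =>
      honly w (Or.inr (hsub w hw))
    have hst : s ∈ t.nodes G := hseed v hv hvs ▸ hv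
    -- A root other than the seed carries an edge of `t`.
    have hre : t.root ≠ s → ∃ f ∈ t.edges, t.root ∈ G.ends f := by
      intro hrs
      rcases (h1 s).1 hst with h | ⟨e, he, -⟩
      · exact absurd h.symm hrs
      · obtain ⟨f, hf, x, -, hx⟩ := h2 ⟨e, he⟩
        exact ⟨f, hf, by simp [hx]⟩
    by_cases hnt : n ∈ t.nodes G
    · have hnr : n = t.root := by
        by_contra hnr
        obtain ⟨e, he, f, hf, hef, h3, h4⟩ :=
          two_edges (R.hvalid t ht) hmo hseed hnt (Ne.symm hsn) hnr
        exact hef (hnl.edge_unique (htP he) (htP hf) h3 h4)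
      have hsat' : ∀ w ∈ t.nodes G, ∀ e ∈ P, w ∈ G.ends e → e ∈ t.edges := by
        intro w hw e he hwe
        by_cases hwr : w = t.root
        · obtain ⟨f, hf, hrf⟩ := hre (by rw [← hnr]; exact Ne.symm hsn)
          have : e = f := hnl.edge_unique he (htP hf) (by rw [hnr, ← hwr]; exact hwe)
            (by rw [hnr]; exact hrf)
          exact this ▸ hf
        · exact hsat w hw hwr e he hwe
      refine ⟨t, ht, htP.antisymm ?_, hnr.symm⟩
      intro e he
      obtain ⟨y, hy⟩ : ∃ y, y ∈ G.ends e := ⟨_, Sym2.out_fst_mem _⟩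
      refine hsat' y ?_ e he hy
      by_contra hyt
      obtain ⟨f, hf, a, ha, b, hb, hfab⟩ := exists_exit (hconn s hsP y ⟨e, he, hy⟩) hst hyt
      exact hb ((h1 b).2 (Or.inr ⟨f, hsat' a ha f hf (by simp [hfab]), by simp [hfab]⟩))
    · obtain ⟨e, he, a, ha, b, hb, heab⟩ := exists_exit (hconn s hsP n hnP) hst hnt
      have het : e ∉ t.edges := fun h => hb ((h1 b).2 (Or.inr ⟨e, h, by simp [heab]⟩))
      have har : a = t.root := by
        by_contra har
        exact het (hsat a ha har e he (by simp [heab]))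
      have hbP : b ∈ nodeSet G P := ⟨e, he, by simp [heab]⟩
      have hbs : b ≠ s := fun h => hb (h ▸ hst)
      have hval : ValidProv G S (.grow t e b) := by
        refine .grow (R.hvalid t ht) (har ▸ heab) hb ?_ ?_ hmo
        · rintro ⟨i, -, hi⟩
          exact hbs (honly b (Or.inr hbP) ⟨i, hi⟩)
        · intro hall
          obtain ⟨i, hi⟩ := hfull
          obtain ⟨w, hw, hwi⟩ := hall i
          exact hi (hseed w hw ⟨i, hwi⟩ ▸ hwi)
      obtain ⟨t', ht', hE⟩ := R.hgrow t ht e b hval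
      have hmo' := R.hnomo t' ht'
      obtain ⟨k1, k2, -⟩ := Prov.wf (R.hvalid t' ht') hmo'
      have hE' : t'.edges ⊆ P := by
        rw [hE]
        exact Finset.insert_subset he htP
      have hnode' : ∀ w ∈ nodeSet G t'.edges, w = b ∨ w ∈ t.nodes G := by
        rintro w ⟨f, hf, hwf⟩
        rw [hE, Finset.mem_insert] at hf
        rcases hf with rfl | hf
        · rw [heab, Sym2.mem_iff] at hwf
          rcases hwf with rfl | rfl
          · exact Or.inr ha
          · exact Or.inl rfl
        · exact Or.inr ((h1 w).2 (Or.inr ⟨f, hf, hwf⟩))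
      have hroot' : t'.root ∈ nodeSet G t'.edges := by
        obtain ⟨f, hf, x, -, hx⟩ := k2 ⟨e, by simp [hE]⟩
        exact ⟨f, hf, by simp [hx]⟩
      have hseed' : ∀ w ∈ t'.nodes G, isSeed S w → w = s := by
        intro w hw
        apply honly w
        right
        rcases (k1 w).1 hw with rfl | ⟨f, hf, hwf⟩
        · obtain ⟨f, hf, hwf⟩ := hroot'
          exact ⟨f, hE' hf, hwf⟩
        · exact ⟨f, hE' hf, hwf⟩
      -- `b` has only the edge `e` in `t'`, so it can only be the root.
      have hb' : b = t'.root := by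
        by_contra hbr
        obtain ⟨f, hf, g, hg, hfg, hbf, hbg⟩ := two_edges (R.hvalid t' ht') hmo' hseed'
          ((k1 b).2 (Or.inr ⟨e, by simp [hE], by simp [heab]⟩)) hbs hbr
        have key : ∀ f ∈ t'.edges, b ∈ G.ends f → f = e := by
          intro f hf hbf
          rw [hE, Finset.mem_insert] at hf
          exact hf.resolve_right fun h => hb ((h1 b).2 (Or.inr ⟨f, h, hbf⟩))
        exact hfg ((key f hf hbf).trans (key g hg hbg).symm)
      refine IH _ ?_ t' ht' hE' (hb' ▸ hbP) ?_ rfl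
      · rw [← hd]
        apply Finset.card_lt_card
        rw [Finset.ssubset_iff_of_subset]
        · exact ⟨e, by simp [he, het], by simp [hE]⟩
        · rw [hE]
          exact Finset.sdiff_subset_sdiff subset_rfl (Finset.subset_insert _ _)
      · intro w hw hwr f hf hwf
        rw [← hb'] at hwr
        have hwt : w ∈ t.nodes G := by
          rcases (k1 w).1 hw with h | h
          · exact absurd (h.trans hb'.symm) hwr
          · exact (hnode' w h).resolve_left hwr
        rw [hE, Finset.mem_insert]
        by_cases hwa : w = a
        · have hwe : w ∈ G.ends e := by simp [heab, hwa]
          by_cases hws : w = s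
          · exact Or.inl (hsl.edge_unique hf he (hws ▸ hwf) (hws ▸ hwe))
          · have hwroot : w = t.root := hwa.trans har
            obtain ⟨g, hg, hrg⟩ := hre (hwroot ▸ hws)
            rw [← hwroot] at hrg
            rcases eq_or_eq_of_deg_le_two (hdeg w (hsub w hwt)) he (htP hg) hf hwe hrg hwf
              (fun h => het (h ▸ hg)) with h | h
            · exact Or.inl h
            · exact Or.inr (h ▸ hg)
        · exact Or.inr (hsat w hwt (har ▸ hwa) f hf hwf)

/-- The hypothesis that `s` misses some seed set is needed since Grow is disabled on trees that
already contain a seed from each set. -/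
theorem nsPath_built (R : LESPRun G S) {P : Finset E} {n s : V} (hP : IsNSPath G S P n s)
    (hn : ¬ isSeed S n) (hfull : ∃ i, s ∉ S i) :
    ∃ p ∈ R.built, p.edges = P ∧ p.root = n := by
  refine nsPath_built_aux R hP hn hfull _ (.init s) (R.hinit s hP.2.1) ?_ ?_ ?_ rfl
  · simp [Prov.edges]
  · rcases hP.2.2.1 with ⟨-, rfl⟩ | h
    · exact absurd hP.2.1 hn
    · exact h.2.2.1
  · intro w hw hwr
    exact absurd hw hwr

end CTP

/-- for any integer `u ≥ 3` and any non-seed node `n`, any `(u,n)`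
rooted merge is guaranteed to be found by LESP, regardless of the execution
order. -/
theorem lesp_finds_u_rooted_merges {V E : Type*} [DecidableEq E] {m : ℕ}
    (G : Multigraph V E) (S : Fin m → Set V) (R : LESPRun G S)
    (u : ℕ) (hu : 3 ≤ u) (T : Finset E) (n : V)
    (h : IsURootedMerge G S u T n) :
    FindsRooted R.built T n := by
  obtain ⟨hn, P, s, hP, hdisj, hsets, rfl⟩ := h
  have hfull : ∀ j, ∃ i, s j ∉ S i := by
    intro j
    obtain ⟨k, hk⟩ : ∃ k, k ≠ j := by
      by_contra! hc
      have h1 := (hc ⟨0, by omega⟩).trans (hc ⟨1, by omega⟩).symm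
      simp at h1
    obtain ⟨i, hi⟩ := (hP k).2.1
    exact ⟨i, fun hj => hsets j k hk.symm i ⟨hj, hi⟩⟩
  choose p hpB hpE hpR using fun j => nsPath_built R (hP j) hn (hfull j)
  have hPne : ∀ j, (P j).Nonempty ∧ n ∈ nodeSet G (P j) := by
    intro j
    rcases (hP j).2.2.1 with ⟨-, h⟩ | h
    · exact absurd (h ▸ (hP j).2.1) hn
    · exact ⟨Finset.nonempty_iff_ne_empty.2 h.1, h.2.2.2.1⟩
  have hnodes : ∀ j, ∀ v ∈ (p j).nodes G, v ∈ nodesIn G (P j) n := by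
    intro j v hv
    rcases ((Prov.wf (R.hvalid _ (hpB j)) (R.hnomo _ (hpB j))).1 v).1 hv with h | h
    · exact Or.inr (h ▸ (hpR j).symm ▸ (hPne j).2)
    · exact Or.inr (hpE j ▸ h)
  have hedge : ∀ j, ∃ e ∈ P j, ∃ x, x ≠ n ∧ G.ends e = s(x, n) := by
    intro j
    have := (Prov.wf (R.hvalid _ (hpB j)) (R.hnomo _ (hpB j))).2.1 (by rw [hpE]; exact (hPne j).1)
    rwa [hpE, hpR] at this
  choose e heP x hxn hex using hedge
  choose c hc using fun j => (hP j).2.1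
  have hcinj : Function.Injective c := by
    intro j k hjk
    by_contra hne
    exact hsets j k hne (c j) ⟨hc j, hjk ▸ hc k⟩
  have heinj : Function.Injective e := by
    intro j k hjk
    by_contra hne
    refine hxn j (hdisj j k hne ⟨Or.inr ⟨e j, heP j, ?_⟩, Or.inr ⟨e k, heP k, ?_⟩⟩)
    · simp [hex]
    · simp [← hjk, hex]
  have hdeg3 : HasDegThree G n := by
    refine ⟨e ⟨0, by omega⟩, e ⟨1, by omega⟩, e ⟨2, by omega⟩, ?_, ?_, ?_, ?_, ?_, ?_⟩
    · exact heinj.ne (by simp)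
    · exact heinj.ne (by simp)
    · exact heinj.ne (by simp)
    all_goals simp [hex]
  have : Nonempty (Fin u) := ⟨⟨0, by omega⟩⟩
  obtain ⟨j₀, hj₀⟩ := Finite.exists_max fun j => R.time (p j)
  have hss : ∀ τ, R.time (p j₀) < τ → 3 ≤ (ssAt R.toPreRun τ n).ncard := by
    intro τ hτ
    have hsub : Set.range c ⊆ ssAt R.toPreRun τ n := by
      rintro _ ⟨j, rfl⟩
      exact ⟨p j, hpB j, (hj₀ j).trans_lt hτ, hpR j, s j, hc j, (hpE j).symm ▸ hP j⟩
    have h1 := Set.ncard_le_ncard hsub (Set.toFinite _)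
    have h2 : (Set.range c).ncard = u := by
      rw [← Nat.card_coe_set_eq, Nat.card_range_of_injective hcinj, Nat.card_fin]
    omega
  have hmain : ∀ A : Finset (Fin u), j₀ ∉ A → ∃ q ∈ R.built, q.root = n ∧
      q.edges = (insert j₀ A).biUnion P ∧ R.time (p j₀) ≤ R.time q ∧
      ∀ v ∈ q.nodes G, ∃ j ∈ insert j₀ A, v ∈ (p j).nodes G := by
    intro A
    induction A using Finset.induction_on with
    | empty =>
      intro _
      exact ⟨p j₀, hpB j₀, hpR j₀, by simp [hpE], le_rfl, fun v hv => ⟨j₀, by simp, hv⟩⟩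
    | @insert k A hk IH =>
      intro hj
      rw [Finset.mem_insert, not_or] at hj
      obtain ⟨q, hqB, hqR, hqE, hqt, hqn⟩ := IH hj.2
      have hkA : ∀ j ∈ insert j₀ A, j ≠ k := by
        rintro j hjA rfl
        rw [Finset.mem_insert] at hjA
        exact hjA.elim (fun h => hj.1 h.symm) hk
      have hval : ValidProv G S (.merge q (p k)) := by
        refine .merge (R.hvalid q hqB) (R.hvalid _ (hpB k)) (hqR.trans (hpR k).symm) ?_ ?_
        · rintro v ⟨hv, hvk⟩
          obtain ⟨j, hjA, hvj⟩ := hqn v hv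
          rw [hqR]
          exact hdisj j k (hkA j hjA) ⟨hnodes j v hvj, hnodes k v hvk⟩
        · rw [Set.eq_empty_iff_forall_notMem]
          rintro i ⟨⟨v, hv, hvi⟩, ⟨w, hw, hwi⟩⟩
          obtain ⟨j, hjA, hvj⟩ := hqn v hv
          have h1 := (hP j).2.2.2 v (hnodes j v hvj) ⟨i, hvi⟩
          have h2 := (hP k).2.2.2 w (hnodes k w hw) ⟨i, hwi⟩
          exact hsets j k (hkA j hjA) i ⟨h1 ▸ hvi, h2 ▸ hwi⟩
      have hB := R.hmergeExempt q hqB (p k) (hpB k) hval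
        (by rw [hqR]; exact hss _ (by omega)) (by rw [hqR]; exact hdeg3)
      refine ⟨_, hB, hqR, ?_, ?_, ?_⟩
      · rw [Finset.insert_comm, Finset.biUnion_insert, ← hqE, Finset.union_comm]
        simp only [Prov.edges, hpE]
      · exact hqt.trans (R.hchild _ hB q (by simp [Prov.children])).2.le
      · rintro v (hv | hv)
        · obtain ⟨j, hjA, hvj⟩ := hqn v hv
          refine ⟨j, ?_, hvj⟩
          simp only [Finset.mem_insert] at hjA ⊢
          tauto
        · exact ⟨k, by simp, hv⟩
  obtain ⟨q, hqB, hqR, hqE, -⟩ := hmain (Finset.univ.erase j₀) (by simp)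
  rw [Finset.insert_erase (Finset.mem_univ _)] at hqE
  exact ⟨q, hqB, hqE, hqR⟩
end
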